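/- Let G be a finite group whose power graph is chordal and whose order is p^a · q^b for distinct primes p and q and natural numbers a, b. Then every induced path in the power graph of G has at most 15 vertices; that is, if there is a graph embedding of the path graph on L vertices into the power graph of G, then L ≤ 15. -/

import Mathlib

/-- The power graph of a group: distinct `x` and `y` are adjacent iff one is a power
of the other. -/
def powerGraph (G : Type*) [Group G] : SimpleGraph G :=
  SimpleGraph.fromRel (fun x y => x ∈ Subgroup.zpowers y)

/-- A graph is chordal if it has no induced cycle on at least 4 vertices. -/
def IsChordal {V : Type*} (Γ : SimpleGraph V) : Prop :=
  ∀ n : ℕ, 4 ≤ n → IsEmpty (SimpleGraph.cycleGraph n ↪g Γ)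

/-!
Call two subgroups of distinct prime orders adjacent if they commute. A cycle in this graph would
give an induced cycle of twice the length in the power graph, so the graph is a forest, and `G` acts
on it by conjugation, preserving orders of subgroups.

An induced path with `2 * n + 2` vertices in the power graph alternates between smaller and larger
cyclic subgroups. Picking suitable subgroups of prime order in the smaller ones yields a walk
without backtracking with `n` edges in the forest, hence, for `n = 7`, two vertices of one tree at
distance `7`.

On the other hand, take a centre `C` of this tree. Conjugation by an element of a vertex of the
tree preserves the tree and cannot move `C` to a neighbour, so it fixes `C`: all vertices of the
tree normalize `C`. If `S` and `O` are adjacent, `|S| = |C|` and `S` is at distance more than `2`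
from `C`, then `O` normalizes but does not centralize `C`, so `|O| < |C|`. The neighbour `Y` of `C`
on the path to `S` is normalized but not centralized by `S`, so `|C| = |S| < |Y|`, and three primes
divide `|G|`, a contradiction. As each edge has an end of order `|C|`, all vertices are at distance
at most `3` from `C`, and so at most `6` from each other.
-/

open SimpleGraph Subgroup

section Chordal

variable {V : Type*} {Γ : SimpleGraph V}

lemma cycleGraph_adj_iff_of_lt {m : ℕ} {i j : Fin m} (hij : i < j) :
    (cycleGraph m).Adj i j ↔ (j : ℕ) = i + 1 ∨ (i : ℕ) = 0 ∧ (j : ℕ) + 1 = m := by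
  rw [cycleGraph_adj', Fin.sub_val_of_le hij.le, Fin.val_sub, Nat.mod_eq_of_lt (by omega)]
  omega

lemma IsChordal.false_of_injective_of_adj_iff (hΓ : IsChordal Γ) {m : ℕ} (hm : 4 ≤ m)
    {F : Fin m → V} (hF : Function.Injective F)
    (hadj : ∀ i j, i < j → (Γ.Adj (F i) (F j) ↔ (cycleGraph m).Adj i j)) : False := by
  refine (hΓ m hm).false ⟨⟨F, hF⟩, fun {i j} => ?_⟩
  change Γ.Adj (F i) (F j) ↔ (cycleGraph m).Adj i j
  rcases lt_trichotomy i j with hij | rfl | hji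
  · exact hadj i j hij
  · simp only [SimpleGraph.irrefl]
  · rw [Γ.adj_comm, (cycleGraph m).adj_comm]
    exact hadj j i hji

lemma IsChordal.false_of_alternating_cycle (hΓ : IsChordal Γ) {n : ℕ} {P E : Fin (n + 2) → V}
    (hP : Function.Injective P) (hE : Function.Injective E)
    (hPP : ∀ i j, ¬ Γ.Adj (P i) (P j)) (hEE : ∀ i j, ¬ Γ.Adj (E i) (E j))
    (hPE : ∀ i j, Γ.Adj (P i) (E j) ↔ i = j ∨ i = j + 1) : False := by
  have hne (i j) : P i ≠ E j := fun h => hPP j i (h ▸ (hPE j j).2 (.inl rfl))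
  let half (k : Fin (2 * (n + 2))) : Fin (n + 2) := ⟨k / 2, by omega⟩
  have hhalf {k l} (h : half k = half l) : (k : ℕ) / 2 = l / 2 := congrArg Fin.val h
  have val_succ (i : Fin (n + 2)) : ((i + 1 : Fin (n + 2)) : ℕ) =
      if (i : ℕ) = n + 1 then 0 else (i : ℕ) + 1 := by
    simp only [Fin.val_add_one, Fin.ext_iff, Fin.val_last]
  refine hΓ.false_of_injective_of_adj_iff (m := 2 * (n + 2)) (by omega)
    (F := fun k => if (k : ℕ) % 2 = 0 then P (half k) else E (half k)) ?_ ?_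
  · intro k l h
    dsimp only at h
    split_ifs at h with hk hl hl
    · have := hhalf (hP h); omega
    · exact absurd h (hne _ _)
    · exact absurd h.symm (hne _ _)
    · have := hhalf (hE h); omega
  · intro k l hkl
    rw [cycleGraph_adj_iff_of_lt hkl]
    split_ifs with hk hl hl
    · simp only [hPP, false_iff]; omega
    · rw [hPE, Fin.ext_iff, Fin.ext_iff, val_succ]
      grind
    · rw [Γ.adj_comm, hPE, Fin.ext_iff, Fin.ext_iff, val_succ]
      grind
    · simp only [hEE, false_iff]; omega

end Chordal

section CyclicSubgroups

variable {G : Type*} [Group G]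

lemma zpowers_le_zpowers_of_orderOf_dvd {u x y : G} (hu : IsOfFinOrder u)
    (hx : zpowers x ≤ zpowers u) (hy : zpowers y ≤ zpowers u) (h : orderOf x ∣ orderOf y) :
    zpowers x ≤ zpowers y := by
  obtain ⟨k, rfl⟩ := hu.mem_powers_iff_mem_zpowers.2 (zpowers_le.1 hx)
  obtain ⟨l, rfl⟩ := hu.mem_powers_iff_mem_zpowers.2 (zpowers_le.1 hy)
  dsimp only at h ⊢
  have hk : (orderOf u).gcd l ∣ k := by
    have hpow : orderOf u ∣ k * (orderOf u / (orderOf u).gcd l) := by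
      rw [orderOf_dvd_iff_pow_eq_one, pow_mul, ← orderOf_dvd_iff_pow_eq_one, ← hu.orderOf_pow]
      exact h
    have hpos : 0 < orderOf u / (orderOf u).gcd l :=
      Nat.div_pos (Nat.gcd_le_left _ hu.orderOf_pos) (Nat.gcd_pos_of_pos_left _ hu.orderOf_pos)
    refine Nat.dvd_of_mul_dvd_mul_right hpos ?_
    rwa [Nat.mul_div_cancel' (Nat.gcd_dvd_left _ _)]
  obtain ⟨m, rfl⟩ := hk
  have hgcd : u ^ (orderOf u).gcd l ∈ zpowers (u ^ l) := by
    refine mem_zpowers_iff.2 ⟨(orderOf u).gcdB l, ?_⟩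
    rw [← zpow_natCast, ← zpow_natCast, Nat.gcd_eq_gcd_ab, zpow_add, zpow_mul u (orderOf u),
      zpow_natCast u (orderOf u), pow_orderOf_eq_one, one_zpow, one_mul, zpow_mul]
  rw [zpowers_le, pow_mul]
  exact pow_mem hgcd m

lemma zpowers_eq_zpowers_of_le_of_prime {x y : G} (hx : (orderOf x).Prime)
    (hy : (orderOf y).Prime) (h : zpowers x ≤ zpowers y) : zpowers x = zpowers y := by
  have hord : orderOf x = orderOf y :=
    (Nat.prime_dvd_prime_iff_eq hx hy).1 (orderOf_dvd_of_mem_zpowers (zpowers_le.1 h))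
  exact h.antisymm
    (zpowers_le_zpowers_of_orderOf_dvd (orderOf_pos_iff.1 hy.pos) le_rfl h hord.symm.dvd)

lemma exists_prime_dvd_orderOf_of_incompRel {u x y : G} (hu : IsOfFinOrder u)
    (hx : zpowers x ≤ zpowers u) (hy : zpowers y ≤ zpowers u)
    (hxy : IncompRel (· ≤ ·) (zpowers x) (zpowers y)) :
    ∃ r s : ℕ, r.Prime ∧ s.Prime ∧ r ≠ s ∧ r ∣ orderOf x ∧ s ∣ orderOf y := by
  have hx0 : orderOf x ≠ 0 := (hu.of_mem_zpowers (zpowers_le.1 hx)).orderOf_pos.ne'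
  have hy0 : orderOf y ≠ 0 := (hu.of_mem_zpowers (zpowers_le.1 hy)).orderOf_pos.ne'
  have hxy' : ¬ orderOf x ∣ orderOf y := fun h =>
    hxy.1 (zpowers_le_zpowers_of_orderOf_dvd hu hx hy h)
  have hyx' : ¬ orderOf y ∣ orderOf x := fun h =>
    hxy.2 (zpowers_le_zpowers_of_orderOf_dvd hu hy hx h)
  rw [← Nat.factorization_prime_le_iff_dvd hx0 hy0] at hxy'
  rw [← Nat.factorization_prime_le_iff_dvd hy0 hx0] at hyx'
  push Not at hxy' hyx'
  obtain ⟨r, hr, hrlt⟩ := hxy'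
  obtain ⟨s, hs, hslt⟩ := hyx'
  refine ⟨r, s, hr, hs, ?_, Nat.dvd_of_factorization_pos hrlt.ne_bot,
    Nat.dvd_of_factorization_pos hslt.ne_bot⟩
  rintro rfl
  exact hrlt.not_gt hslt

lemma exists_zpowers_le_orderOf_eq {x : G} (hx : IsOfFinOrder x) {r : ℕ} (hr : r ∣ orderOf x) :
    ∃ y : G, zpowers y ≤ zpowers x ∧ orderOf y = r :=
  ⟨x ^ (orderOf x / r), zpowers_le.2 (npow_mem_zpowers x _),
    orderOf_pow_orderOf_div hx.orderOf_pos.ne' hr⟩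

lemma zpowers_le_zpowers_mul_of_coprime {x y : G} (hxy : Commute x y)
    (h : (orderOf x).Coprime (orderOf y)) : zpowers x ≤ zpowers (x * y) := by
  have hpow : (x * y) ^ orderOf y = x ^ orderOf y := by
    rw [hxy.mul_pow, pow_orderOf_eq_one, mul_one]
  have hmem : x ∈ zpowers (x ^ orderOf y) := by
    obtain ⟨m, hm⟩ := exists_pow_eq_self_of_coprime h.symm
    exact mem_zpowers_iff.2 ⟨m, by exact_mod_cast hm⟩
  exact zpowers_le.2 (zpowers_le.2 (hpow ▸ npow_mem_zpowers (x * y) _) hmem)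

lemma commute_of_mem_zpowers {u x y : G} (hx : x ∈ zpowers u) (hy : y ∈ zpowers u) :
    Commute x y := by
  obtain ⟨k, rfl⟩ := mem_zpowers_iff.1 hx
  obtain ⟨l, rfl⟩ := mem_zpowers_iff.1 hy
  exact (Commute.refl u).zpow_zpow k l

lemma exists_zpowers_eq_of_prime_card {X : Subgroup G} (hX : (Nat.card X).Prime) :
    ∃ g : G, zpowers g = X := by
  have := Fact.mk hX
  exact (Subgroup.isCyclic_iff_exists_zpowers_eq_top X).1 (isCyclic_of_prime_card rfl)

lemma card_lt_card_of_le_normalizer {X Y : Subgroup G} [Finite Y] (hX : (Nat.card X).Prime)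
    (hXY : X ≤ normalizer Y) (hcomm : ¬ X ≤ centralizer Y) : Nat.card X < Nat.card Y := by
  obtain ⟨y, hyY, hXy⟩ : ∃ y ∈ Y, ¬ X ≤ centralizer {y} := by
    by_contra! h
    exact hcomm fun x hx => mem_centralizer_iff.2 fun y hy =>
      mem_centralizer_singleton_iff.1 (h y hy hx) |>.symm
  have hdisj : Disjoint (centralizer {y}) X := by
    have := Fact.mk hX
    exact subgroupOf_eq_bot.1 ((eq_bot_or_eq_top_of_prime_card _).resolve_right fun h =>
      hXy (subgroupOf_eq_top.1 h))
  let conj (z : X) : Y := ⟨z * y * (z : G)⁻¹, (mem_normalizer_iff.1 (hXY z.2) y).1 hyY⟩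
  have hinj : Function.Injective conj := by
    intro z w h
    have hzw : (z : G) * y * (z : G)⁻¹ = w * y * (w : G)⁻¹ := congrArg Subtype.val h
    have hmem : (w : G)⁻¹ * z ∈ centralizer {y} := by
      rw [mem_centralizer_singleton_iff]
      have := congrArg (fun t => (w : G)⁻¹ * t * z) hzw
      simpa [mul_assoc] using this
    exact Subtype.ext (inv_mul_eq_one.1
      (disjoint_def.1 hdisj hmem (X.mul_mem (X.inv_mem w.2) z.2))).symm
  have hone : (1 : Y) ∉ Set.range conj := by
    rintro ⟨z, hz⟩
    have hy1 : y = 1 := conj_eq_one_iff.1 (congrArg Subtype.val hz)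
    exact hXy (by simp [hy1, mem_centralizer_singleton_iff, SetLike.le_def])
  have := Fintype.ofFinite Y
  have := Fintype.ofInjective conj hinj
  simpa only [Nat.card_eq_fintype_card] using
    Fintype.card_lt_of_injective_of_notMem conj hinj hone

end CyclicSubgroups

section PowerGraph

variable {G : Type*} [Group G]

lemma powerGraph_adj {x y : G} :
    (powerGraph G).Adj x y ↔ x ≠ y ∧ (zpowers x ≤ zpowers y ∨ zpowers y ≤ zpowers x) := by
  simp only [powerGraph, fromRel_adj, zpowers_le]

lemma IsChordal.false_of_cyclic_incidence (hG : IsChordal (powerGraph G)) {n : ℕ}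
    {P E : Fin (n + 2) → G} (hP : ∀ i j, zpowers (P i) ≤ zpowers (P j) → i = j)
    (hE : ∀ i j, zpowers (E i) ≤ zpowers (E j) → i = j)
    (hPE : ∀ i j, zpowers (P i) ≤ zpowers (E j) ↔ i = j ∨ i = j + 1) : False := by
  have hEP (i j) : ¬ zpowers (E j) ≤ zpowers (P i) := fun h => by
    have hji : j = i := hE j i (h.trans ((hPE i i).2 (.inl rfl)))
    have hji' : j = i - 1 :=
      hE j (i - 1) (h.trans ((hPE i (i - 1)).2 (.inr (sub_add_cancel i 1).symm)))
    exact one_ne_zero (sub_eq_self.1 (hji'.symm.trans hji))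
  refine hG.false_of_alternating_cycle (P := P) (E := E) (fun i j h => hP i j (by rw [h]))
    (fun i j h => hE i j (by rw [h])) ?_ ?_ ?_
  · rintro i j h
    obtain ⟨hne, h | h⟩ := powerGraph_adj.1 h
    · exact hne (congrArg P (hP i j h))
    · exact hne (congrArg P (hP j i h).symm)
  · rintro i j h
    obtain ⟨hne, h | h⟩ := powerGraph_adj.1 h
    · exact hne (congrArg E (hE i j h))
    · exact hne (congrArg E (hE j i h).symm)
  · intro i j
    have hne : P i ≠ E j := fun h => hEP i j (by rw [h])
    simp only [powerGraph_adj, hne, hEP, hPE, ne_eq, not_false_eq_true, true_and, or_false]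

lemma IsChordal.le_or_le_of_le_inf (hG : IsChordal (powerGraph G)) {u v x y : G}
    (huv : IncompRel (· ≤ ·) (zpowers u) (zpowers v))
    (hx : zpowers x ≤ zpowers u ⊓ zpowers v) (hy : zpowers y ≤ zpowers u ⊓ zpowers v) :
    zpowers x ≤ zpowers y ∨ zpowers y ≤ zpowers x := by
  by_contra! hxy
  obtain ⟨hxu, hxv⟩ := le_inf_iff.1 hx
  obtain ⟨hyu, hyv⟩ := le_inf_iff.1 hy
  refine hG.false_of_cyclic_incidence (P := ![x, y]) (E := ![u, v]) ?_ ?_ ?_ <;>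
    simp [Fin.forall_fin_two, hxy, huv.1, huv.2, hxu, hxv, hyu, hyv, -zpowers_le]

lemma IsChordal.zpowers_eq_of_le_inf (hG : IsChordal (powerGraph G)) {u v x y : G}
    (huv : IncompRel (· ≤ ·) (zpowers u) (zpowers v))
    (hx : zpowers x ≤ zpowers u ⊓ zpowers v) (hy : zpowers y ≤ zpowers u ⊓ zpowers v)
    (hpx : (orderOf x).Prime) (hpy : (orderOf y).Prime) : zpowers x = zpowers y :=
  (hG.le_or_le_of_le_inf huv hx hy).elim (zpowers_eq_zpowers_of_le_of_prime hpx hpy)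
    fun h => (zpowers_eq_zpowers_of_le_of_prime hpy hpx h).symm

end PowerGraph

section PrimeSubgroupGraph

variable {G : Type*} [Group G]

/-- The graph on the subgroups of `G` in which two subgroups are adjacent when they have distinct
prime orders and commute elementwise; all other subgroups are isolated vertices. Its edges are the
cyclic subgroups of order a product of two distinct primes. -/
def primeSubgroupGraph (G : Type*) [Group G] : SimpleGraph (Subgroup G) where
  Adj X Y := (Nat.card X).Prime ∧ (Nat.card Y).Prime ∧ Nat.card X ≠ Nat.card Y ∧ X ≤ centralizer Y
  symm := ⟨fun _ _ ⟨hX, hY, hne, hcomm⟩ => ⟨hY, hX, hne.symm, le_centralizer_iff.1 hcomm⟩⟩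
  loopless := ⟨fun _ ⟨_, _, hne, _⟩ => hne rfl⟩

lemma primeSubgroupGraph_adj_zpowers {x y : G} :
    (primeSubgroupGraph G).Adj (zpowers x) (zpowers y) ↔
      (orderOf x).Prime ∧ (orderOf y).Prime ∧ orderOf x ≠ orderOf y ∧ Commute x y := by
  have hcomm : zpowers x ≤ centralizer (zpowers y) ↔ Commute x y := by
    rw [zpowers_le, zpowers_eq_closure, centralizer_closure, mem_centralizer_singleton_iff,
      commute_iff_eq]
  simp only [primeSubgroupGraph, Nat.card_zpowers, hcomm]

lemma zpowers_le_zpowers_mul_iff_of_adj {x y z : G} (hz : (orderOf z).Prime)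
    (hxy : (primeSubgroupGraph G).Adj (zpowers x) (zpowers y)) :
    zpowers z ≤ zpowers (x * y) ↔ zpowers z = zpowers x ∨ zpowers z = zpowers y := by
  obtain ⟨hx, hy, hne, hcomm⟩ := primeSubgroupGraph_adj_zpowers.1 hxy
  have hcop : (orderOf x).Coprime (orderOf y) := (Nat.coprime_primes hx hy).2 hne
  have hxle : zpowers x ≤ zpowers (x * y) := zpowers_le_zpowers_mul_of_coprime hcomm hcop
  have hyle : zpowers y ≤ zpowers (x * y) :=
    hcomm.eq ▸ zpowers_le_zpowers_mul_of_coprime hcomm.symm hcop.symm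
  refine ⟨fun hle => ?_, by rintro (h | h) <;> rwa [h]⟩
  have hord : orderOf (x * y) = orderOf x * orderOf y :=
    hcomm.orderOf_mul_eq_mul_orderOf_of_coprime hcop
  have hfin : IsOfFinOrder (x * y) :=
    orderOf_pos_iff.1 (hord ▸ Nat.mul_pos hx.pos hy.pos)
  have heq {w : G} (hw : zpowers w ≤ zpowers (x * y)) (h : orderOf z = orderOf w) :
      zpowers z = zpowers w :=
    le_antisymm (zpowers_le_zpowers_of_orderOf_dvd hfin hle hw h.dvd)
      (zpowers_le_zpowers_of_orderOf_dvd hfin hw hle h.symm.dvd)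
  have hdvd : orderOf z ∣ orderOf x * orderOf y :=
    hord ▸ orderOf_dvd_of_mem_zpowers (zpowers_le.1 hle)
  refine (hz.dvd_mul.1 hdvd).imp (fun h => heq hxle ?_) (fun h => heq hyle ?_)
  · exact (Nat.prime_dvd_prime_iff_eq hz hx).1 h
  · exact (Nat.prime_dvd_prime_iff_eq hz hy).1 h

/-- A cycle `X₀, …, Xₙ` of prime-order subgroups would give the induced cycle
`X₀, X₀X₁, X₁, X₁X₂, …, Xₙ, XₙX₀` of generators in the power graph. -/
lemma IsChordal.isAcyclic_primeSubgroupGraph (hG : IsChordal (powerGraph G)) :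
    (primeSubgroupGraph G).IsAcyclic := by
  refine isAcyclic_iff_free_cycleGraph.2 fun n hn ⟨c⟩ => ?_
  obtain ⟨m, rfl⟩ := Nat.exists_eq_add_of_le' hn
  have hadj (i : Fin (m + 3)) : (primeSubgroupGraph G).Adj (c i) (c (i + 1)) :=
    c.toHom.map_adj (by simp [cycleGraph_adj])
  choose g hg using fun i => exists_zpowers_eq_of_prime_card (hadj i).1
  have hinj {i j} : zpowers (g i) = zpowers (g j) ↔ i = j := by
    rw [hg, hg]
    exact c.injective.eq_iff
  have hprime (i) : (orderOf (g i)).Prime := by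
    simpa only [← Nat.card_zpowers, hg] using (hadj i).1
  have hPE (i j) : zpowers (g i) ≤ zpowers (g j * g (j + 1)) ↔ i = j ∨ i = j + 1 := by
    rw [zpowers_le_zpowers_mul_iff_of_adj (hprime i) (by simpa only [hg] using hadj j)]
    exact or_congr hinj hinj
  have htwo : (1 + 1 : Fin (m + 3)) ≠ 0 := by
    rw [Ne, Fin.ext_iff, Fin.val_add, Fin.val_one, Nat.mod_eq_of_lt (by omega)]
    exact two_ne_zero
  refine hG.false_of_cyclic_incidence (P := g) (E := fun j => g j * g (j + 1)) ?_ ?_ hPE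
  · intro i j hij
    have h₁ := (hPE i j).1 (hij.trans ((hPE j j).2 (.inl rfl)))
    have h₂ := (hPE i (j - 1)).1 (hij.trans ((hPE j (j - 1)).2 (.inr (sub_add_cancel j 1).symm)))
    grind
  · intro i j hij
    have h₁ := (hPE i j).1 (((hPE i i).2 (.inl rfl)).trans hij)
    have h₂ := (hPE (i + 1) j).1 (((hPE (i + 1) i).2 (.inr rfl)).trans hij)
    grind

end PrimeSubgroupGraph

section Forest

variable {V : Type*} {T : SimpleGraph V}

lemma eq_of_adj_of_dist_lt (hT : T.IsAcyclic) {v a b w : V} (ha : T.Adj v a) (hb : T.Adj v b)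
    (hwa : T.dist w a < T.dist w v) (hwb : T.dist w b < T.dist w v) : a = b := by
  have hvw : T.Reachable v w := (Reachable.of_dist_ne_zero (Nat.ne_zero_of_lt hwa)).symm
  have exists_isPath_cons {c : V} (hc : T.Adj v c) (hwc : T.dist w c < T.dist w v) :
      ∃ p : T.Walk c w, (Walk.cons hc p).IsPath := by
    obtain ⟨p, hp⟩ := (hc.symm.reachable.trans hvw).exists_walk_length_eq_dist
    refine ⟨p, Walk.isPath_of_length_eq_dist _ (le_antisymm ?_ (dist_le _))⟩
    rw [Walk.length_cons, hp, dist_comm, T.dist_comm (u := v)]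
    exact hwc
  obtain ⟨p, hp⟩ := exists_isPath_cons ha hwa
  obtain ⟨q, hq⟩ := exists_isPath_cons hb hwb
  have hpq : Walk.cons ha p = Walk.cons hb q :=
    congrArg Subtype.val ((hT.subsingleton_path v w).elim ⟨_, hp⟩ ⟨_, hq⟩)
  simpa only [Walk.snd_cons] using congrArg Walk.snd hpq

lemma dist_eq_succ_of_adj_of_ne (hT : T.IsAcyclic) {a v b w : V} (ha : T.Adj a v)
    (hb : T.Adj v b) (hab : a ≠ b) (hwv : T.dist w v = T.dist w a + 1) :
    T.dist w b = T.dist w v + 1 := by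
  have hreach : T.Reachable w v := .of_dist_ne_zero (by omega)
  refine (hT.dist_eq_dist_add_one_of_adj_of_reachable w hb hreach).resolve_left fun h => hab ?_
  exact eq_of_adj_of_dist_lt hT ha.symm hb (w := w) (by omega) (by omega)

/-- The sequence `X 0, …, X n` is a walk in `T` that never returns along the edge it has just
traversed. The later values of `X` are irrelevant. -/
structure IsNonbacktracking (T : SimpleGraph V) (X : ℕ → V) (n : ℕ) : Prop where
  adj : ∀ i < n, T.Adj (X i) (X (i + 1))
  ne : ∀ i, i + 2 ≤ n → X i ≠ X (i + 2)

namespace IsNonbacktracking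

variable {X : ℕ → V} {n : ℕ}

lemma dist_eq_dist_add (hX : IsNonbacktracking T X n) (hT : T.IsAcyclic) {w : V}
    (hw : T.dist w (X 1) = T.dist w (X 0) + 1) :
    ∀ i ≤ n, T.dist w (X i) = T.dist w (X 0) + i
  | 0, _ => rfl
  | 1, _ => hw
  | i + 2, hi => by
    have h₀ := hX.dist_eq_dist_add hT hw i (by omega)
    have h₁ := hX.dist_eq_dist_add hT hw (i + 1) (by omega)
    have h₂ : T.dist w (X (i + 2)) = T.dist w (X (i + 1)) + 1 :=
      dist_eq_succ_of_adj_of_ne hT (hX.adj i (by omega)) (hX.adj (i + 1) (by omega))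
        (hX.ne i hi) (by omega)
    omega

lemma reachable (hX : IsNonbacktracking T X n) {i : ℕ} (hi : i ≤ n) :
    T.Reachable (X 0) (X i) := by
  induction i with
  | zero => rfl
  | succ i ih => exact (ih (by omega)).trans (hX.adj i (by omega)).reachable

lemma dist_start_end (hX : IsNonbacktracking T X n) (hT : T.IsAcyclic) :
    T.dist (X 0) (X n) = n := by
  rcases n.eq_zero_or_pos with rfl | hn
  · exact dist_self
  · have hdist : T.dist (X 0) (X 1) = T.dist (X 0) (X 0) + 1 := by
      rw [dist_self, dist_eq_one_iff_adj.2 (hX.adj 0 hn)]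
    rw [hX.dist_eq_dist_add hT hdist n le_rfl, dist_self, zero_add]

end IsNonbacktracking

lemma isNonbacktracking_getVert {x y : V} {p : T.Walk x y} (hp : p.IsPath) :
    IsNonbacktracking T p.getVert p.length where
  adj _ hi := p.adj_getVert_succ hi
  ne i hi h := by
    have : i = i + 2 := hp.getVert_injOn (by omega : i ≤ p.length) hi h
    omega

lemma exists_adj_dist_lt_max (hT : T.IsAcyclic) {x y : V} (hxy : 2 ≤ T.dist x y) :
    ∃ z, T.Adj x z ∧ ∀ w, T.Reachable x w → T.dist w z < max (T.dist w x) (T.dist w y) := by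
  have hreach : T.Reachable x y := .of_dist_ne_zero (by omega)
  obtain ⟨p, hp, hlen⟩ := hreach.exists_path_of_dist
  have hnb := isNonbacktracking_getVert hp
  have hadj : T.Adj x p.snd := by simpa using hnb.adj 0 (by omega)
  refine ⟨p.snd, hadj, fun w hw => lt_max_iff.2 ?_⟩
  rcases hT.dist_eq_dist_add_one_of_adj_of_reachable w hadj hw.symm with h | h
  · exact .inl (by omega)
  · have hwy := hnb.dist_eq_dist_add hT (by simpa using h) _ le_rfl
    simp only [Walk.getVert_length, Walk.getVert_zero] at hwy
    exact .inr (by omega)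

lemma dist_map_le {V' : Type*} {T' : SimpleGraph V'} (f : T →g T') {x y : V}
    (hxy : T.Reachable x y) : T'.dist (f x) (f y) ≤ T.dist x y := by
  obtain ⟨p, hp⟩ := hxy.exists_walk_length_eq_dist
  exact (dist_le (p.map f)).trans_eq (by rw [Walk.length_map, hp])

lemma dist_map_iso {V' : Type*} {T' : SimpleGraph V'} (f : T ≃g T') (x y : V) :
    T'.dist (f x) (f y) = T.dist x y := by
  by_cases hxy : T.Reachable x y
  · have hfxy : T'.Reachable (f x) (f y) := f.reachable_iff.2 hxy
    refine le_antisymm (dist_map_le f.toHom hxy) ?_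
    simpa using dist_map_le f.symm.toHom hfxy
  · rw [dist_eq_zero_of_not_reachable hxy,
      dist_eq_zero_of_not_reachable (mt f.reachable_iff.1 hxy)]

/-- The eccentricity of a vertex within its connected component: vertices outside the component
do not contribute, as their `dist` to `v` is `0`. -/
noncomputable def componentEccent (T : SimpleGraph V) (v : V) : ℕ :=
  ⨆ w, T.dist v w

lemma componentEccent_map_iso (f : T ≃g T) (v : V) :
    componentEccent T (f v) = componentEccent T v :=
  (f.toEquiv.iSup_congr fun w => dist_map_iso f v w).symm

lemma dist_le_componentEccent [Finite V] (T : SimpleGraph V) (v w : V) :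
    T.dist v w ≤ componentEccent T v :=
  le_ciSup (f := fun w => T.dist v w) (Set.finite_range _).bddAbove w

lemma exists_dist_eq_componentEccent [Finite V] (T : SimpleGraph V) (v : V) :
    ∃ w, T.Reachable v w ∧ T.dist v w = componentEccent T v := by
  have : Nonempty V := ⟨v⟩
  obtain ⟨w, hw⟩ := exists_eq_ciSup_of_finite (f := fun w => T.dist v w)
  by_cases h : T.Reachable v w
  · exact ⟨w, h, hw⟩
  · exact ⟨v, .rfl, by rw [dist_self, ← dist_eq_zero_of_not_reachable h]; exact hw⟩

lemma exists_reachable_forall_iso_eq_or_adj [Finite V] (hT : T.IsAcyclic) (x : V) :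
    ∃ c, T.Reachable x c ∧ ∀ f : T ≃g T, T.Reachable x (f x) → f c = c ∨ T.Adj c (f c) := by
  obtain ⟨c, hc, hmin⟩ := Set.exists_min_image {v | T.Reachable x v} (componentEccent T)
    (Set.toFinite _) ⟨x, .rfl⟩
  refine ⟨c, hc, fun f hf => ?_⟩
  have hcf : T.Reachable c (f c) := hc.symm.trans (hf.trans (f.reachable_iff.2 hc))
  by_contra! h
  obtain ⟨z, hz, hzlt⟩ := exists_adj_dist_lt_max hT
    (hcf.one_lt_dist_of_ne_of_not_adj (Ne.symm h.1) h.2)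
  obtain ⟨w, hzw, hw⟩ := exists_dist_eq_componentEccent T z
  refine (hmin z (hc.trans hz.reachable)).not_gt ?_
  calc componentEccent T z = T.dist w z := by rw [← hw, dist_comm]
    _ < max (T.dist w c) (T.dist w (f c)) := hzlt w (hz.reachable.trans hzw)
    _ ≤ componentEccent T c := by
      rw [dist_comm, T.dist_comm (u := w)]
      exact max_le (dist_le_componentEccent T c w)
        ((dist_le_componentEccent T (f c) w).trans_eq (componentEccent_map_iso f c))

end Forest

section Center

variable {G H : Type*} [Group G] [Group H]

/-- The isomorphism of prime subgroup graphs induced by a group isomorphism. -/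
def primeSubgroupGraphCongr (e : G ≃* H) : primeSubgroupGraph G ≃g primeSubgroupGraph H where
  toEquiv := e.mapSubgroup.toEquiv
  map_rel_iff' {X Y} := by
    have hcard (Z : Subgroup G) : Nat.card (Z.map (e : G →* H)) = Nat.card Z :=
      card_map_of_injective e.injective
    have hcomm : X.map (e : G →* H) ≤ centralizer (Y.map (e : G →* H)) ↔ X ≤ centralizer Y := by
      simp [SetLike.le_def, mem_centralizer_iff, ← map_mul]
    change _ ∧ _ ∧ _ ∧ _ ↔ _ ∧ _ ∧ _ ∧ _
    rw [← hcomm, ← hcard X, ← hcard Y]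
    rfl

lemma primeSubgroupGraphCongr_conj_eq_self_iff {g : G} {X : Subgroup G} :
    primeSubgroupGraphCongr (MulAut.conj g) X = X ↔ g ∈ normalizer X :=
  mem_normalizer_iff_map_conj_eq.symm

lemma not_adj_primeSubgroupGraphCongr (e : G ≃* G) (X : Subgroup G) :
    ¬ (primeSubgroupGraph G).Adj X (primeSubgroupGraphCongr e X) := fun h =>
  h.2.2.1 (card_map_of_injective (f := (e : G →* G)) e.injective).symm

lemma prime_card_of_reachable {X Y : Subgroup G} (hXY : (primeSubgroupGraph G).Reachable X Y)
    (hX : (Nat.card X).Prime) : (Nat.card Y).Prime := by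
  obtain ⟨p⟩ := hXY.symm
  cases p with
  | nil => exact hX
  | cons hadj _ => exact hadj.1

lemma exists_reachable_forall_le_normalizer [Finite G]
    (hT : (primeSubgroupGraph G).IsAcyclic) (X : Subgroup G) :
    ∃ C, (primeSubgroupGraph G).Reachable X C ∧
      ∀ Y, (primeSubgroupGraph G).Reachable X Y → Y ≤ normalizer C := by
  obtain ⟨C, hXC, hC⟩ := exists_reachable_forall_iso_eq_or_adj hT X
  refine ⟨C, hXC, fun Y hXY g hg => ?_⟩
  have hfY : primeSubgroupGraphCongr (MulAut.conj g) Y = Y :=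
    primeSubgroupGraphCongr_conj_eq_self_iff.2 (le_normalizer hg)
  have hfX : (primeSubgroupGraph G).Reachable X (primeSubgroupGraphCongr (MulAut.conj g) X) :=
    hXY.trans (hfY ▸ Iso.reachable_iff.2 hXY.symm)
  exact primeSubgroupGraphCongr_conj_eq_self_iff.1
    ((hC _ hfX).resolve_right (not_adj_primeSubgroupGraphCongr _ C))

lemma le_normalizer_of_adj_of_dist_lt (hT : (primeSubgroupGraph G).IsAcyclic)
    {S C Y : Subgroup G} (hSC : S ≤ normalizer C) (hCY : (primeSubgroupGraph G).Adj C Y)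
    (hlt : (primeSubgroupGraph G).dist S Y < (primeSubgroupGraph G).dist S C) :
    S ≤ normalizer Y := by
  intro g hg
  let f := primeSubgroupGraphCongr (MulAut.conj g)
  have hfS : f S = S := primeSubgroupGraphCongr_conj_eq_self_iff.2 (le_normalizer hg)
  have hfC : f C = C := primeSubgroupGraphCongr_conj_eq_self_iff.2 (hSC hg)
  have hadj : (primeSubgroupGraph G).Adj C (f Y) := by
    simpa only [hfC] using f.map_adj_iff.2 hCY
  have hdist : (primeSubgroupGraph G).dist S (f Y) = (primeSubgroupGraph G).dist S Y := by
    simpa only [hfS] using dist_map_iso f S Y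
  exact primeSubgroupGraphCongr_conj_eq_self_iff.1
    (eq_of_adj_of_dist_lt hT hadj hCY (hdist.trans_lt hlt) hlt)

lemma card_lt_card_of_le_normalizer_of_not_adj {X Y : Subgroup G} (hX : (Nat.card X).Prime)
    (hY : (Nat.card Y).Prime) (hne : Nat.card X ≠ Nat.card Y) (hXY : X ≤ normalizer Y)
    (hadj : ¬ (primeSubgroupGraph G).Adj X Y) : Nat.card X < Nat.card Y :=
  have : Finite Y := Nat.finite_of_card_ne_zero hY.ne_zero
  card_lt_card_of_le_normalizer hX hXY fun h => hadj ⟨hX, hY, hne, h⟩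

lemma card_eq_of_primeFactors_card_le_two [Finite G] (hG : (Nat.card G).primeFactors.card ≤ 2)
    {X Y Z : Subgroup G} (hX : (Nat.card X).Prime) (hY : (Nat.card Y).Prime)
    (hZ : (Nat.card Z).Prime) :
    Nat.card X = Nat.card Y ∨ Nat.card X = Nat.card Z ∨ Nat.card Y = Nat.card Z := by
  have hmem {W : Subgroup G} (hW : (Nat.card W).Prime) :
      Nat.card W ∈ (Nat.card G).primeFactors :=
    hW.mem_primeFactors W.card_subgroup_dvd_card Nat.card_pos.ne'
  by_contra! h
  exact hG.not_gt (Finset.two_lt_card_iff.2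
    ⟨_, _, _, hmem hX, hmem hY, hmem hZ, h.1, h.2.1, h.2.2⟩)

lemma dist_le_two_of_card_eq [Finite G] (hT : (primeSubgroupGraph G).IsAcyclic)
    (hG : (Nat.card G).primeFactors.card ≤ 2) {C S O : Subgroup G}
    (hSO : (primeSubgroupGraph G).Adj S O) (hS : S ≤ normalizer C) (hO : O ≤ normalizer C)
    (hCS : Nat.card C = Nat.card S) : (primeSubgroupGraph G).dist C S ≤ 2 := by
  by_contra! hdist
  obtain ⟨hSp, hOp, hSOne, -⟩ := id hSO
  obtain ⟨Y, hCY, hY⟩ := exists_adj_dist_lt_max hT hdist.le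
  have hreach : (primeSubgroupGraph G).Reachable C S := .of_dist_ne_zero (by omega)
  have hlt : (primeSubgroupGraph G).dist S Y < (primeSubgroupGraph G).dist S C := by
    simpa using hY S hreach
  have not_adj_adj {Z : Subgroup G} (hCZ : (primeSubgroupGraph G).Adj C Z)
      (hZS : (primeSubgroupGraph G).Adj Z S) : False :=
    hdist.not_ge (dist_le (.cons hCZ (.cons hZS .nil)))
  have hOC : Nat.card O < Nat.card C :=
    card_lt_card_of_le_normalizer_of_not_adj hOp (hCS ▸ hSp) (hCS ▸ hSOne.symm) hO
      fun h => not_adj_adj h.symm hSO.symm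
  have hSY : Nat.card S < Nat.card Y :=
    card_lt_card_of_le_normalizer_of_not_adj hSp hCY.2.1 (hCS ▸ hCY.2.2.1)
      (le_normalizer_of_adj_of_dist_lt hT hS hCY hlt) fun h => not_adj_adj hCY h.symm
  have hcards := card_eq_of_primeFactors_card_le_two hG hOp hSp hCY.2.1
  omega

lemma dist_le_three_of_adj [Finite G] (hT : (primeSubgroupGraph G).IsAcyclic)
    (hG : (Nat.card G).primeFactors.card ≤ 2) {C S O : Subgroup G}
    (hC : (Nat.card C).Prime) (hSO : (primeSubgroupGraph G).Adj S O) (hS : S ≤ normalizer C)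
    (hO : O ≤ normalizer C) : (primeSubgroupGraph G).dist C S ≤ 3 := by
  obtain ⟨hSp, hOp, hSOne, -⟩ := id hSO
  rcases card_eq_of_primeFactors_card_le_two hG hC hSp hOp with hCS | hCO | h
  · exact (dist_le_two_of_card_eq hT hG hSO hS hO hCS).trans (by omega)
  · calc (primeSubgroupGraph G).dist C S
        ≤ (primeSubgroupGraph G).dist C O + (primeSubgroupGraph G).dist O S :=
          hSO.symm.reachable.dist_triangle_right C
      _ ≤ 2 + 1 := add_le_add (dist_le_two_of_card_eq hT hG hSO.symm hO hS hCO)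
          (dist_eq_one_iff_adj.2 hSO.symm).le
  · exact absurd h hSOne

lemma IsNonbacktracking.le_six [Finite G] (hT : (primeSubgroupGraph G).IsAcyclic)
    (hG : (Nat.card G).primeFactors.card ≤ 2) {X : ℕ → Subgroup G} {n : ℕ}
    (hX : IsNonbacktracking (primeSubgroupGraph G) X n) : n ≤ 6 := by
  obtain _ | n := n
  · exact Nat.zero_le 6
  obtain ⟨C, hC, hnorm⟩ := exists_reachable_forall_le_normalizer hT (X 0)
  have hfirst := hX.adj 0 n.succ_pos
  have hlast := (hX.adj n n.lt_succ_self).symm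
  have hCp : (Nat.card C).Prime := prime_card_of_reachable hC hfirst.1
  have hX_le {i : ℕ} (hi : i ≤ n + 1) : X i ≤ normalizer C := hnorm _ (hX.reachable hi)
  calc n + 1 = (primeSubgroupGraph G).dist (X 0) (X (n + 1)) := (hX.dist_start_end hT).symm
    _ ≤ (primeSubgroupGraph G).dist (X 0) C + (primeSubgroupGraph G).dist C (X (n + 1)) :=
      hC.dist_triangle_left _
    _ ≤ 3 + 3 := by
      rw [dist_comm]
      exact add_le_add
        (dist_le_three_of_adj hT hG hCp hfirst (hX_le (Nat.zero_le _)) (hX_le (by omega)))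
        (dist_le_three_of_adj hT hG hCp hlast (hX_le le_rfl) (hX_le n.le_succ))

end Center

section Fence

/-- The sequence `d 0 ≤ u 0 ≥ d 1 ≤ u 1 ≥ ⋯ ≤ u (n - 1) ≥ d n` zigzags in a preorder, and
consecutive lower terms, as well as consecutive upper terms, are incomparable. The other values of
`d` and `u` are irrelevant. -/
structure IsFence {α : Type*} [Preorder α] (d u : ℕ → α) (n : ℕ) : Prop where
  le : ∀ i < n, d i ≤ u i
  succ_le : ∀ i < n, d (i + 1) ≤ u i
  incompRel_lower : ∀ i < n, IncompRel (· ≤ ·) (d i) (d (i + 1))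
  incompRel_upper : ∀ i, i + 1 < n → IncompRel (· ≤ ·) (u i) (u (i + 1))

/-- Two consecutive comparabilities in the same direction would compose to one between terms at
distance two, so the directions alternate. -/
lemma exists_isFence_of_comparable_iff {α : Type*} [Preorder α] {x : ℕ → α} {N n : ℕ}
    (hN : 2 * n + 2 ≤ N)
    (hx : ∀ i j, i < j → j < N → ((x i ≤ x j ∨ x j ≤ x i) ↔ j = i + 1)) :
    ∃ c, IsFence (fun i => x (c + 2 * i)) (fun i => x (c + 2 * i + 1)) n := by
  have comparable {i : ℕ} (hi : i + 1 < N) : x i ≤ x (i + 1) ∨ x (i + 1) ≤ x i :=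
    (hx i (i + 1) (by omega) hi).2 rfl
  have incomparable {i : ℕ} (hi : i + 2 < N) : IncompRel (· ≤ ·) (x i) (x (i + 2)) :=
    not_or.1 (mt (hx i (i + 2) (by omega) hi).1 (by omega))
  have down_of_up {i : ℕ} (hi : i + 2 < N) (h : x i ≤ x (i + 1)) : x (i + 2) ≤ x (i + 1) :=
    (comparable (i := i + 1) hi).resolve_left fun h' => (incomparable hi).1 (h.trans h')
  have up_of_down {i : ℕ} (hi : i + 2 < N) (h : x (i + 1) ≤ x i) : x (i + 1) ≤ x (i + 2) :=
    (comparable (i := i + 1) hi).resolve_right fun h' => (incomparable hi).2 (h'.trans h)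
  obtain ⟨c, hc, hup⟩ : ∃ c ≤ 1, c + 1 < N → x c ≤ x (c + 1) := by
    rcases comparable (i := 0) (by omega) with h | h
    · exact ⟨0, zero_le_one, fun _ => h⟩
    · exact ⟨1, le_rfl, fun hN => up_of_down hN h⟩
  have up (i : ℕ) (hi : i < n) : x (c + 2 * i) ≤ x (c + 2 * i + 1) := by
    induction i with
    | zero => exact hup (by omega)
    | succ i ih =>
      exact up_of_down (i := c + 2 * i + 1) (by omega)
        (down_of_up (i := c + 2 * i) (by omega) (ih (by omega)))
  exact ⟨c, up, fun i hi => down_of_up (i := c + 2 * i) (by omega) (up i hi),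
    fun i hi => incomparable (i := c + 2 * i) (by omega),
    fun i hi => incomparable (i := c + 2 * i + 1) (by omega)⟩

variable {G : Type*} [Group G]

lemma exists_isFence_zpowers_of_pathGraph_embedding {L n : ℕ} (f : pathGraph L ↪g powerGraph G)
    (hL : 2 * n + 2 ≤ L) :
    ∃ d u : ℕ → G, IsFence (fun i => zpowers (d i)) (fun i => zpowers (u i)) n := by
  let x (i : ℕ) : G := if h : i < L then f ⟨i, h⟩ else 1
  have hx (i j : ℕ) (hij : i < j) (hj : j < L) :
      (zpowers (x i) ≤ zpowers (x j) ∨ zpowers (x j) ≤ zpowers (x i)) ↔ j = i + 1 := by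
    have hi : i < L := hij.trans hj
    have hne : x i ≠ x j := by simp [x, hi, hj, hij.ne]
    calc
      _ ↔ (powerGraph G).Adj (x i) (x j) := by rw [powerGraph_adj, and_iff_right hne]
      _ ↔ (pathGraph L).Adj ⟨i, hi⟩ ⟨j, hj⟩ := by
        simp only [x, hi, hj, dif_pos, f.map_adj_iff]
      _ ↔ j = i + 1 := by
        rw [pathGraph_adj]
        dsimp only
        omega
  obtain ⟨c, hc⟩ := exists_isFence_of_comparable_iff (x := fun i => zpowers (x i)) hL hx
  exact ⟨_, _, hc⟩

lemma exists_adj_zpowers_of_incompRel {u x y : G} (hu : IsOfFinOrder u)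
    (hx : zpowers x ≤ zpowers u) (hy : zpowers y ≤ zpowers u)
    (hxy : IncompRel (· ≤ ·) (zpowers x) (zpowers y)) :
    ∃ s t : G, zpowers s ≤ zpowers x ∧ zpowers t ≤ zpowers y ∧
      (primeSubgroupGraph G).Adj (zpowers s) (zpowers t) := by
  obtain ⟨r, r', hr, hr', hne, hrx, hry⟩ := exists_prime_dvd_orderOf_of_incompRel hu hx hy hxy
  obtain ⟨s, hs, rfl⟩ :=
    exists_zpowers_le_orderOf_eq (hu.of_mem_zpowers (zpowers_le.1 hx)) hrx
  obtain ⟨t, ht, rfl⟩ :=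
    exists_zpowers_le_orderOf_eq (hu.of_mem_zpowers (zpowers_le.1 hy)) hry
  refine ⟨s, t, hs, ht, primeSubgroupGraph_adj_zpowers.2 ⟨hr, hr', hne, ?_⟩⟩
  exact commute_of_mem_zpowers (zpowers_le.1 (hs.trans hx)) (zpowers_le.1 (ht.trans hy))

lemma IsChordal.exists_isNonbacktracking_of_isFence (hG : IsChordal (powerGraph G))
    {d u : ℕ → G} {n : ℕ} (hu : ∀ i < n, IsOfFinOrder (u i))
    (hfence : IsFence (fun i => zpowers (d i)) (fun i => zpowers (u i)) n) :
    ∃ X, IsNonbacktracking (primeSubgroupGraph G) X n := by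
  choose! s t hs ht hadj using fun i hi => exists_adj_zpowers_of_incompRel (hu i hi)
    (hfence.le i hi) (hfence.succ_le i hi) (hfence.incompRel_lower i hi)
  have eq_of_le_inf {i : ℕ} (hi : i + 1 < n) {x y : G} (hxp : (orderOf x).Prime)
      (hyp : (orderOf y).Prime) (hx : zpowers x ≤ zpowers (u i) ⊓ zpowers (u (i + 1)))
      (hy : zpowers y ≤ zpowers (u i) ⊓ zpowers (u (i + 1))) : zpowers x = zpowers y :=
    hG.zpowers_eq_of_le_inf (hfence.incompRel_upper i hi) hx hy hxp hyp
  have hsp (i : ℕ) (hi : i < n) := (primeSubgroupGraph_adj_zpowers.1 (hadj i hi)).1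
  have htp (i : ℕ) (hi : i < n) := (primeSubgroupGraph_adj_zpowers.1 (hadj i hi)).2.1
  have hsu (i : ℕ) (hi : i < n) : zpowers (s i) ≤ zpowers (u i) := (hs i hi).trans (hfence.le i hi)
  have htu (i : ℕ) (hi : i < n) : zpowers (t i) ≤ zpowers (u i) :=
    (ht i hi).trans (hfence.succ_le i hi)
  have htu' (i : ℕ) (hi : i + 1 < n) : zpowers (t i) ≤ zpowers (u i) ⊓ zpowers (u (i + 1)) :=
    le_inf (htu i (by omega)) ((ht i (by omega)).trans (hfence.le (i + 1) hi))
  let X : ℕ → Subgroup G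
    | 0 => zpowers (s 0)
    | i + 1 => zpowers (t i)
  have hX {i : ℕ} (hi : i < n) : X i = zpowers (s i) := by
    cases i with
    | zero => rfl
    | succ i =>
      exact eq_of_le_inf hi (htp i (by omega)) (hsp (i + 1) hi) (htu' i hi)
        (le_inf ((hs (i + 1) hi).trans (hfence.succ_le i (by omega))) (hsu (i + 1) hi))
  refine ⟨X, fun i hi => hX hi ▸ hadj i hi, fun i hi h => ?_⟩
  have hst : zpowers (s i) = zpowers (t (i + 1)) := (hX (by omega)).symm.trans h
  exact (hadj i (by omega)).ne (eq_of_le_inf hi (hsp i (by omega)) (htp i (by omega))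
    (le_inf (hsu i (by omega)) (hst ▸ htu (i + 1) hi)) (htu' i hi))

end Fence

lemma card_primeFactors_pow_mul_pow_le_two {p q : ℕ} (hp : p.Prime) (hq : q.Prime) (a b : ℕ) :
    (p ^ a * q ^ b).primeFactors.card ≤ 2 := by
  have hsub {r : ℕ} (hr : r.Prime) (k : ℕ) : (r ^ k).primeFactors ⊆ {r} := by
    rcases eq_or_ne k 0 with rfl | hk
    · simp
    · exact (Nat.primeFactors_prime_pow hk hr).subset
  rw [Nat.primeFactors_mul (pow_ne_zero a hp.ne_zero) (pow_ne_zero b hq.ne_zero)]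
  exact (Finset.card_le_card (Finset.union_subset_union (hsub hp a) (hsub hq b))).trans
    Finset.card_le_two

theorem stmt2 (G : Type*) [Group G] [Fintype G]
    (p q : ℕ) (a b : ℕ) (hp : p.Prime) (hq : q.Prime) (hpq : p ≠ q)
    (hcard : Fintype.card G = p ^ a * q ^ b)
    (hchordal : IsChordal (powerGraph G)) (L : ℕ)
    (hpath : Nonempty (SimpleGraph.pathGraph L ↪g powerGraph G)) :
    L ≤ 15 := by
  by_contra! hL
  obtain ⟨f⟩ := hpath
  obtain ⟨d, u, hfence⟩ := exists_isFence_zpowers_of_pathGraph_embedding (n := 7) f hL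
  obtain ⟨X, hX⟩ := hchordal.exists_isNonbacktracking_of_isFence
    (fun i _ => isOfFinOrder_of_finite (u i)) hfence
  have hprimes : (Nat.card G).primeFactors.card ≤ 2 := by
    rw [Nat.card_eq_fintype_card, hcard]
    exact card_primeFactors_pow_mul_pow_le_two hp hq a b
  have hseven : 7 ≤ 6 := hX.le_six hchordal.isAcyclic_primeSubgroupGraph hprimes
  omega
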